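/- Let n ≥ 1 and v ∈ 𝔖_{n+1}. Let S_p(v) = {v(n+2−p),…,v(n+1)} for 1 ≤ p ≤ n, and define w_i := ẽ_{v(i+1)} − ẽ_{v(i)} ∈ ℤⁿ for 1 ≤ i ≤ n, where ẽ_s = e_s for 1 ≤ s ≤ n and ẽ_{n+1} = 0. Then for all 1 ≤ i ≤ n and 1 ≤ p ≤ n, the standard pairing satisfies ⟨w_i, u_{S_p(v)}⟩ = 1 if i = n+1−p, and ⟨w_i, u_{S_p(v)}⟩ = 0 otherwise. That is, (w_n, w_{n−1}, …, w_1) is the dual basis of (u_{S_1(v)}, …, u_{S_n(v)}). -/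

import Mathlib

/-- The standard basis vector `e_s` of `ℤⁿ` for `s ∈ [n+1]`, with the convention
`ẽ_{n+1} = 0`. -/
def permEps (n : ℕ) (s : Fin (n + 1)) : Fin n → ℤ :=
  fun i => if (i : ℕ) = (s : ℕ) then 1 else 0

/-- The ray generator `u_S` of the permutohedral fan, for `∅ ⊊ S ⊊ [n+1]`. -/
def permU (n : ℕ) (S : Finset (Fin (n + 1))) : Fin n → ℤ :=
  if Fin.last n ∈ S then -∑ s ∈ Sᶜ, permEps n s else ∑ s ∈ S, permEps n s

/-- The maximal chain associated to a permutation `v ∈ 𝔖_{n+1}`: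
`S_p(v) = {v(n+2−p), …, v(n+1)}` (1-indexed); here `p : Fin n` (0-indexed)
corresponds to the subset of size `p+1`. -/
def chainOfPerm (n : ℕ) (v : Equiv.Perm (Fin (n + 1))) : Fin n → Finset (Fin (n + 1)) :=
  fun p => (Finset.univ.filter (fun i : Fin (n + 1) => n - (p : ℕ) ≤ (i : ℕ))).image v

/-! Modulo `(1, …, 1)`, the indicator vector of `S` in `ℤⁿ⁺¹` has a unique representative with
last coordinate `0`, and its first `n` coordinates form `u_S`. A difference `ẽ_s − ẽ_r` is likewise
`e_s − e_r` with the last coordinate dropped, and `e_s − e_r` is orthogonal to `(1, …, 1)`; hence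
`⟨ẽ_s − ẽ_r, u_S⟩ = 1_S(s) − 1_S(r)`. Since `S_p(v)` is the image under `v` of a final segment of
`[n+1]`, the sequence `v(1), …, v(n+1)` enters it at a single step, from `v(n+1−p)` to
`v(n+2−p)`. -/

section

variable {n : ℕ}

lemma permEps_apply (s : Fin (n + 1)) (t : Fin n) :
    permEps n s t = if t.castSucc = s then 1 else 0 := by
  simp only [permEps, Fin.ext_iff, Fin.val_castSucc]

lemma permEps_castSucc (j : Fin n) : permEps n j.castSucc = Pi.single j 1 := by
  ext t
  simp only [permEps_apply, Fin.castSucc_inj, Pi.single_apply]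

lemma permEps_last : permEps n (Fin.last n) = 0 := by
  ext t
  rw [permEps_apply, if_neg t.castSucc_ne_last, Pi.zero_apply]

lemma sum_permEps_apply (S : Finset (Fin (n + 1))) (t : Fin n) :
    (∑ s ∈ S, permEps n s) t = if t.castSucc ∈ S then 1 else 0 := by
  simp only [Finset.sum_apply, permEps_apply, Finset.sum_ite_eq]

lemma permU_apply (S : Finset (Fin (n + 1))) (t : Fin n) :
    permU n S t = (if t.castSucc ∈ S then 1 else 0) - (if Fin.last n ∈ S then 1 else 0) := by
  by_cases h_last : Fin.last n ∈ S
  · rw [permU, if_pos h_last, if_pos h_last, Pi.neg_apply, sum_permEps_apply]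
    by_cases ht : t.castSucc ∈ S <;> simp [ht]
  · rw [permU, if_neg h_last, if_neg h_last, sum_permEps_apply, sub_zero]

lemma permEps_dotProduct_permU (S : Finset (Fin (n + 1))) (s : Fin (n + 1)) :
    permEps n s ⬝ᵥ permU n S = (if s ∈ S then 1 else 0) - (if Fin.last n ∈ S then 1 else 0) := by
  cases s using Fin.lastCases with
  | last => rw [permEps_last, zero_dotProduct, sub_self]
  | cast j => rw [permEps_castSucc, single_one_dotProduct, permU_apply]

lemma permEps_sub_dotProduct_permU (S : Finset (Fin (n + 1))) (s r : Fin (n + 1)) :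
    (permEps n s - permEps n r) ⬝ᵥ permU n S =
      (if s ∈ S then 1 else 0) - (if r ∈ S then 1 else 0) := by
  rw [sub_dotProduct, permEps_dotProduct_permU, permEps_dotProduct_permU, sub_sub_sub_cancel_right]

lemma apply_mem_chainOfPerm_iff (v : Equiv.Perm (Fin (n + 1))) (p : Fin n) (j : Fin (n + 1)) :
    v j ∈ chainOfPerm n v p ↔ n - (p : ℕ) ≤ (j : ℕ) := by
  rw [chainOfPerm, v.injective.mem_finset_image, Finset.mem_filter_univ]

end

/-- For `v ∈ 𝔖_{n+1}`, the weights `w_i = ẽ_{v(i+1)} − ẽ_{v(i)}` (for `1 ≤ i ≤ n`,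
here `i : Fin n` is 0-indexed, so `w_i = ẽ_{v(i.succ)} − ẽ_{v(i.castSucc)}`) pair with
the ray generators `u_{S_p(v)}` as a dual basis: `⟨w_i, u_{S_p(v)}⟩ = 1` iff the
1-indexed `i` equals `n+1−p`, i.e. iff `i + p + 1 = n` in 0-indexed terms, and `= 0`
otherwise. -/
theorem weights_dual_to_rays (n : ℕ) (hn : 1 ≤ n) (v : Equiv.Perm (Fin (n + 1)))
    (i p : Fin n) :
    (∑ t, (permEps n (v i.succ) t - permEps n (v i.castSucc) t) *
        permU n (chainOfPerm n v p) t) =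
      if (i : ℕ) + (p : ℕ) + 1 = n then 1 else 0 := by
  calc
    _ = (permEps n (v i.succ) - permEps n (v i.castSucc)) ⬝ᵥ permU n (chainOfPerm n v p) := rfl
    _ = (if n - (p : ℕ) ≤ i + 1 then 1 else 0) - (if n - (p : ℕ) ≤ i then 1 else 0) := by
      simp only [permEps_sub_dotProduct_permU, apply_mem_chainOfPerm_iff, Fin.val_succ,
        Fin.val_castSucc]
    _ = if (i : ℕ) + (p : ℕ) + 1 = n then 1 else 0 := by
      have p_lt : (p : ℕ) < n := p.isLt
      split_ifs <;> omega
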